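/- (Generalized Kolmogorov–Riesz theorem) Let X be a doubling metric measure space (closed balls of positive radius having positive finite measure) such that μ(B(x,r) △ B(y,r)) → 0 as y → x for all x ∈ X, r > 0, and let 1 ≤ p < ∞. A bounded set F ⊆ L^p(X) is relatively compact if and only if: (1) for every ε > 0 there is δ > 0 such that ‖A_r f − f‖_p < ε for all f ∈ F and r ∈ (0,δ); and (2) for every ε > 0 there is a bounded set E ⊆ X with ‖f·χ_{X∖E}‖_p < ε for all f ∈ F. -/

import Mathlib

open MeasureTheory Metric Filter
open scoped ENNReal

/-- The average function `A_r f (x) = μ(B(x,r))⁻¹ ∫_{B(x,r)} f dμ`. -/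
noncomputable def avg {X : Type*} [MeasurableSpace X] [MetricSpace X]
    (μ : Measure X) (r : ℝ) (f : X → ℝ) (x : X) : ℝ :=
  (μ (closedBall x r)).toReal⁻¹ * ∫ y in closedBall x r, f y ∂μ

/-!
The averages `A_r` are bounded on `L^p` uniformly in `r`, by Jensen's inequality, Tonelli's theorem
and doubling. Together with Lebesgue differentiation for bounded functions of bounded support this
gives `A_r f → f` in `L^p` for every `f`, and uniform boundedness makes the convergence uniform on
totally bounded sets.

Conversely, `f` is uniformly close to `χ_E A_r (A_r f)` on `F`. The inner average turns a bounded
subset of `L^p` into functions bounded on bounded sets, hence into a bounded subset of the Hilbert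
space `L^2` of a neighbourhood of `E`, where bounded sequences have weakly convergent subsequences.
The outer average turns weak into pointwise convergence, and dominated convergence then gives
convergence in `L^p`.
-/

open scoped NNReal Topology

section UniformSmallness

variable {ι α : Type*} [PseudoEMetricSpace α] {l : Filter ι} {N : ι → α → ℝ≥0∞} {C : ℝ≥0∞}

theorem eventually_forall_mem_lt_of_totallyBounded (hC : C ≠ ⊤)
    (hN : ∀ᶠ i in l, ∀ f g, N i f ≤ N i g + C * edist f g) {s : Set α} (hs : TotallyBounded s)
    (hlim : ∀ g, Tendsto (N · g) l (𝓝 0)) {ε : ℝ≥0∞} (hε : 0 < ε) :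
    ∀ᶠ i in l, ∀ f ∈ s, N i f < ε := by
  have hε2 : 0 < ε / 2 := ENNReal.half_pos hε.ne'
  obtain ⟨δ, hδ, hδC⟩ := ENNReal.exists_nnreal_pos_mul_lt hC hε2.ne'
  obtain ⟨t, ht, hst⟩ := EMetric.totallyBounded_iff.1 hs δ (by exact_mod_cast hδ)
  have hsmall : ∀ᶠ i in l, ∀ g ∈ t, N i g < ε / 2 :=
    (eventually_all_finite ht).2 fun g _ => (hlim g).eventually_lt_const hε2
  filter_upwards [hN, hsmall] with i hNi hi f hf
  obtain ⟨g, hg, hfg⟩ := Set.mem_iUnion₂.1 (hst hf)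
  calc N i f ≤ N i g + C * edist f g := hNi f g
    _ ≤ N i g + δ * C := by rw [mul_comm C]; gcongr; exact (mem_eball.1 hfg).le
    _ < ε / 2 + ε / 2 := ENNReal.add_lt_add (hi g hg) hδC
    _ = ε := ENNReal.add_halves ε

theorem tendsto_zero_of_mem_closure (hC : C ≠ ⊤)
    (hN : ∀ᶠ i in l, ∀ f g, N i f ≤ N i g + C * edist f g) {D : Set α}
    (hD : ∀ g ∈ D, Tendsto (N · g) l (𝓝 0)) {f : α} (hf : f ∈ closure D) :
    Tendsto (N · f) l (𝓝 0) := by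
  refine ENNReal.tendsto_nhds_zero.2 fun ε hε => ?_
  have hε2 : 0 < ε / 2 := ENNReal.half_pos hε.ne'
  obtain ⟨δ, hδ, hδC⟩ := ENNReal.exists_nnreal_pos_mul_lt hC hε2.ne'
  obtain ⟨g, hg, hfg⟩ := EMetric.mem_closure_iff.1 hf δ (by exact_mod_cast hδ)
  filter_upwards [hN, (hD g hg).eventually_lt_const hε2] with i hNi hi
  calc N i f ≤ N i g + C * edist f g := hNi f g
    _ ≤ ε / 2 + δ * C := by rw [mul_comm C]; gcongr
    _ ≤ ε / 2 + ε / 2 := by gcongr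
    _ = ε := ENNReal.add_halves ε

theorem totallyBounded_of_forall_exists_edist_le {s : Set α}
    (h : ∀ ε : ℝ≥0∞, 0 < ε → ∃ K, TotallyBounded K ∧ ∀ f ∈ s, ∃ k ∈ K, edist f k ≤ ε) :
    TotallyBounded s := by
  refine EMetric.totallyBounded_iff.2 fun ε hε => ?_
  obtain ⟨η, hη, hηε⟩ := exists_between (ENNReal.half_pos hε.ne')
  obtain ⟨K, hK, hsK⟩ := h η hη
  obtain ⟨t, ht, hKt⟩ := EMetric.totallyBounded_iff.1 hK (ε / 2) (ENNReal.half_pos hε.ne')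
  refine ⟨t, ht, fun f hf => ?_⟩
  obtain ⟨k, hk, hfk⟩ := hsK f hf
  obtain ⟨g, hg, hkg⟩ := Set.mem_iUnion₂.1 (hKt hk)
  refine Set.mem_iUnion₂.2 ⟨g, hg, mem_eball.2 ?_⟩
  calc edist f g ≤ edist f k + edist k g := edist_triangle f k g
    _ < ε / 2 + ε / 2 := ENNReal.add_lt_add (hfk.trans_lt hηε) hkg
    _ = ε := ENNReal.add_halves ε

end UniformSmallness

theorem exists_subseq_tendsto_inner {H : Type*} [NormedAddCommGroup H] [InnerProductSpace ℝ H]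
    [CompleteSpace H] [TopologicalSpace.SeparableSpace H] {u : ℕ → H} {C : ℝ}
    (hu : ∀ n, ‖u n‖ ≤ C) :
    ∃ h : H, ‖h‖ ≤ C ∧ ∃ φ : ℕ → ℕ, StrictMono φ ∧
      ∀ v, Tendsto (fun n => inner ℝ (u (φ n)) v) atTop (𝓝 (inner ℝ h v)) := by
  let dual := InnerProductSpace.toDual ℝ H
  have hmem : ∀ n, StrongDual.toWeakDual (dual (u n)) ∈
      WeakDual.toStrongDual ⁻¹' closedBall (0 : StrongDual ℝ H) C := fun n => by
    simpa [dual] using hu n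
  obtain ⟨ℓ, hℓ, φ, hφ, hlim⟩ := WeakDual.isSeqCompact_closedBall ℝ H 0 C hmem
  refine ⟨dual.symm (WeakDual.toStrongDual ℓ), by simpa using hℓ, φ, hφ, fun v => ?_⟩
  have := (WeakDual.eval_continuous v).continuousAt.tendsto.comp hlim
  simpa [dual, Function.comp_def] using this

theorem norm_indicator_le_indicator_const {α E : Type*} [SeminormedAddGroup E] {f : α → E}
    {s : Set α} {M : ℝ} (hf : ∀ x ∈ s, ‖f x‖ ≤ M) (x : α) :
    ‖s.indicator f x‖ ≤ s.indicator (fun _ => M) x := by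
  rw [norm_indicator_eq_indicator_norm]
  exact Set.indicator_le_indicator' (hf x)

section LpNorms

variable {α E ι : Type*} [MeasurableSpace α] {μ : Measure α} [NormedAddCommGroup E] {p : ℝ≥0∞}
  {l : Filter ι}

theorem tendsto_eLpNorm_zero_of_dominated [l.IsCountablyGenerated] (hp : p ≠ ⊤)
    {F : ι → α → E} {g : α → ℝ} (hg : MemLp g p μ)
    (hF : ∀ᶠ i in l, AEStronglyMeasurable (F i) μ) (hFg : ∀ᶠ i in l, ∀ᵐ x ∂μ, ‖F i x‖ ≤ g x)
    (hlim : ∀ᵐ x ∂μ, Tendsto (F · x) l (𝓝 0)) :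
    Tendsto (fun i => eLpNorm (F i) p μ) l (𝓝 0) := by
  rcases eq_or_ne p 0 with rfl | hp0
  · simpa using tendsto_const_nhds
  have hq : 0 < p.toReal := ENNReal.toReal_pos hp0 hp
  have hlint : Tendsto (fun i => ∫⁻ x, ‖F i x‖ₑ ^ p.toReal ∂μ) l (𝓝 (∫⁻ _, 0 ∂μ)) := by
    refine tendsto_lintegral_filter_of_dominated_convergence' (fun x => ‖g x‖ₑ ^ p.toReal)
      ?_ ?_ (lintegral_rpow_enorm_lt_top_of_eLpNorm_lt_top hp0 hp hg.2).ne ?_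
    · filter_upwards [hF] with i hi using hi.enorm.pow_const _
    · filter_upwards [hFg] with i hi
      filter_upwards [hi] with x hx
      gcongr
      exact enorm_le_iff_norm_le.2 (hx.trans (le_abs_self _))
    · filter_upwards [hlim] with x hx
      simpa [hq] using hx.enorm.ennrpow_const p.toReal
  simpa [eLpNorm_eq_lintegral_rpow_enorm_toReal hp0 hp, hq]
    using hlint.ennrpow_const (1 / p.toReal)

theorem tendsto_eLpNorm_indicator_zero [l.IsCountablyGenerated] (hp : p ≠ ⊤) {f : α → E}
    (hf : MemLp f p μ) {s : ι → Set α} (hs : ∀ i, MeasurableSet (s i))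
    (hlim : ∀ x, ∀ᶠ i in l, x ∉ s i) :
    Tendsto (fun i => eLpNorm ((s i).indicator f) p μ) l (𝓝 0) := by
  refine tendsto_eLpNorm_zero_of_dominated hp hf.norm
    (Eventually.of_forall fun i => hf.1.indicator (hs i))
    (Eventually.of_forall fun i => Eventually.of_forall fun x => norm_indicator_le_norm_self f x)
    (Eventually.of_forall fun x => tendsto_const_nhds.congr' ?_)
  filter_upwards [hlim x] with i hi using (Set.indicator_of_notMem hi f).symm

theorem eLpNorm_indicator_le_add (hp : 1 ≤ p) {f g : α → E} (hf : AEStronglyMeasurable f μ)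
    (hg : AEStronglyMeasurable g μ) {s : Set α} (hs : MeasurableSet s) :
    eLpNorm (s.indicator f) p μ ≤ eLpNorm (s.indicator g) p μ + eLpNorm (f - g) p μ := by
  have hsplit : s.indicator f = s.indicator g + s.indicator (f - g) := by
    rw [← Set.indicator_add', add_sub_cancel]
  rw [hsplit]
  refine (eLpNorm_add_le (hg.indicator hs) ((hf.sub hg).indicator hs) hp).trans ?_
  gcongr
  exact eLpNorm_indicator_le _

theorem eLpNorm_sub_indicator_le (hp : 1 ≤ p) {f g : α → E} (hf : AEStronglyMeasurable f μ)
    (hg : AEStronglyMeasurable g μ) {s : Set α} (hs : MeasurableSet s) :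
    eLpNorm (f - s.indicator g) p μ ≤ eLpNorm (sᶜ.indicator f) p μ + eLpNorm (g - f) p μ := by
  have hsplit : f - s.indicator g = sᶜ.indicator f + s.indicator (f - g) := by
    rw [Set.indicator_sub', ← add_sub_assoc, Set.indicator_compl_add_self]
  calc eLpNorm (f - s.indicator g) p μ
      ≤ eLpNorm (sᶜ.indicator f) p μ + eLpNorm (s.indicator (f - g)) p μ := by
        rw [hsplit]
        exact eLpNorm_add_le (hf.indicator hs.compl) ((hf.sub hg).indicator hs) hp
    _ ≤ eLpNorm (sᶜ.indicator f) p μ + eLpNorm (g - f) p μ := by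
        rw [eLpNorm_sub_comm g f]
        gcongr
        exact eLpNorm_indicator_le _

end LpNorms

/-- A doubling measure in the global sense: closed balls of positive radius have positive finite
measure, and doubling the radius multiplies the measure by at most `γ`. Mathlib's
`IsUnifLocDoublingMeasure` only constrains small radii. -/
structure IsDoubling {X : Type*} [PseudoMetricSpace X] [MeasurableSpace X] (μ : Measure X)
    (γ : ℝ≥0) : Prop where
  measure_closedBall_ne_zero : ∀ (x : X) {r : ℝ}, 0 < r → μ (closedBall x r) ≠ 0
  measure_closedBall_ne_top : ∀ (x : X) {r : ℝ}, 0 < r → μ (closedBall x r) ≠ ⊤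
  measure_closedBall_two_mul_le : ∀ (x : X) {r : ℝ}, 0 < r →
    μ (closedBall x (2 * r)) ≤ γ * μ (closedBall x r)

namespace IsDoubling

section Balls

variable {X : Type*} [PseudoMetricSpace X] [MeasurableSpace X] {μ : Measure X} {γ : ℝ≥0}

theorem measure_lt_top_of_isBounded (hμ : IsDoubling μ γ) {E : Set X}
    (hE : Bornology.IsBounded E) : μ E < ⊤ := by
  rcases E.eq_empty_or_nonempty with rfl | ⟨x, -⟩
  · simp
  · obtain ⟨R, hR, hER⟩ := hE.subset_closedBall_lt 0 x
    exact (measure_mono hER).trans_lt (hμ.measure_closedBall_ne_top x hR).lt_top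

theorem measure_closedBall_two_pow_mul_le (hμ : IsDoubling μ γ) (x : X) {r : ℝ} (hr : 0 < r)
    (k : ℕ) : μ (closedBall x (2 ^ k * r)) ≤ γ ^ k * μ (closedBall x r) := by
  induction k with
  | zero => simp
  | succ k ih =>
    calc μ (closedBall x (2 ^ (k + 1) * r)) = μ (closedBall x (2 * (2 ^ k * r))) := by
          rw [pow_succ', mul_assoc]
      _ ≤ γ * μ (closedBall x (2 ^ k * r)) := hμ.measure_closedBall_two_mul_le x (by positivity)
      _ ≤ γ * (γ ^ k * μ (closedBall x r)) := by gcongr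
      _ = γ ^ (k + 1) * μ (closedBall x r) := by rw [pow_succ', mul_assoc]

theorem inv_measure_closedBall_le (hμ : IsDoubling μ γ) {x y : X} {r s : ℝ} (hr : 0 < r)
    (hs : 0 < s) {k : ℕ} (h : closedBall y s ⊆ closedBall x (2 ^ k * r)) :
    (μ (closedBall x r))⁻¹ ≤ γ ^ k * (μ (closedBall y s))⁻¹ := by
  have hle : μ (closedBall y s) ≤ γ ^ k * μ (closedBall x r) :=
    (measure_mono h).trans (hμ.measure_closedBall_two_pow_mul_le x hr k)
  rw [← div_eq_mul_inv, ENNReal.le_div_iff_mul_le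
    (Or.inl (hμ.measure_closedBall_ne_zero y hs)) (Or.inl (hμ.measure_closedBall_ne_top y hs)),
    mul_comm, ← div_eq_mul_inv]
  exact ENNReal.div_le_of_le_mul hle

theorem exists_inv_measure_closedBall_le (hμ : IsDoubling μ γ) {E : Set X}
    (hE : Bornology.IsBounded E) {r : ℝ} (hr : 0 < r) :
    ∃ c : ℝ≥0, ∀ x ∈ E, (μ (closedBall x r))⁻¹ ≤ c := by
  rcases E.eq_empty_or_nonempty with rfl | ⟨x₀, -⟩
  · exact ⟨0, by simp⟩
  obtain ⟨R, hR, hER⟩ := hE.subset_closedBall_lt 0 x₀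
  obtain ⟨k, hk⟩ := pow_unbounded_of_one_lt (2 * R / r) one_lt_two
  rw [div_lt_iff₀ hr] at hk
  have hc : γ ^ k * (μ (closedBall x₀ R))⁻¹ ≠ ⊤ :=
    ENNReal.mul_ne_top (by finiteness) (ENNReal.inv_ne_top.2 (hμ.measure_closedBall_ne_zero x₀ hR))
  refine ⟨(γ ^ k * (μ (closedBall x₀ R))⁻¹).toNNReal, fun x hx => ?_⟩
  rw [ENNReal.coe_toNNReal hc]
  refine hμ.inv_measure_closedBall_le hr hR (closedBall_subset_closedBall' ?_)
  have := mem_closedBall'.1 (hER hx)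
  linarith

theorem sigmaFinite (hμ : IsDoubling μ γ) : SigmaFinite μ := by
  rcases isEmpty_or_nonempty X with hX | ⟨⟨x⟩⟩
  · rw [Measure.eq_zero_of_isEmpty μ]
    infer_instance
  · exact ⟨⟨⟨fun n : ℕ => closedBall x n, fun _ => trivial,
      fun n => hμ.measure_lt_top_of_isBounded isBounded_closedBall, iUnion_closedBall_nat x⟩⟩⟩

theorem isLocallyFiniteMeasure (hμ : IsDoubling μ γ) : IsLocallyFiniteMeasure μ :=
  ⟨fun x => ⟨closedBall x 1, closedBall_mem_nhds x one_pos,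
    hμ.measure_lt_top_of_isBounded isBounded_closedBall⟩⟩

theorem isUnifLocDoublingMeasure (hμ : IsDoubling μ γ) : IsUnifLocDoublingMeasure μ :=
  ⟨γ, by filter_upwards [self_mem_nhdsWithin] with r hr x
    using hμ.measure_closedBall_two_mul_le x hr⟩

theorem secondCountableTopology [OpensMeasurableSpace X] (hμ : IsDoubling μ γ) :
    SecondCountableTopology X := by
  have := hμ.sigmaFinite
  refine Metric.secondCountable_of_almost_dense_set fun ε hε => ?_
  obtain ⟨u, -, hdisj, hu⟩ := Vitali.exists_disjoint_subfamily_covering_enlargement_closedBall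
    (Set.univ : Set X) id (fun _ => ε / 5) (ε / 5) (fun _ _ => le_rfl) 5 (by norm_num)
  have hcount := Measure.countable_meas_pos_of_disjoint_iUnion (μ := μ)
    (As := fun x : u => closedBall (x : X) (ε / 5)) (fun _ => measurableSet_closedBall)
    (fun x y hxy => hdisj x.2 y.2 (Subtype.coe_ne_coe.2 hxy))
  have huniv : {x : u | 0 < μ (closedBall (x : X) (ε / 5))} = Set.univ :=
    Set.eq_univ_of_forall fun x =>
      pos_iff_ne_zero.2 (hμ.measure_closedBall_ne_zero _ (by positivity))
  rw [huniv, Set.countable_univ_iff] at hcount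
  refine ⟨u, Set.countable_coe_iff.1 hcount, fun x => ?_⟩
  obtain ⟨y, hy, hxy⟩ := hu x trivial
  refine ⟨y, hy, ?_⟩
  have := mem_closedBall.1 (hxy (mem_closedBall_self (by positivity)))
  simpa [mul_div_cancel₀] using this

end Balls

end IsDoubling

theorem enorm_setAverage_le_mul_eLpNorm {α E : Type*} [MeasurableSpace α] {μ : Measure α}
    [NormedAddCommGroup E] [NormedSpace ℝ E] {p : ℝ≥0∞} (hp : 1 ≤ p) {f : α → E}
    (hf : AEStronglyMeasurable f μ) {s : Set α} (h0 : μ s ≠ 0) (ht : μ s ≠ ⊤) :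
    ‖⨍ y in s, f y ∂μ‖ₑ ≤ (μ s)⁻¹ ^ (1 / p.toReal) * eLpNorm f p (μ.restrict s) := by
  let ν : Measure α := (μ s)⁻¹ • μ.restrict s
  have : IsProbabilityMeasure ν := ⟨by simp [ν, ENNReal.inv_mul_cancel h0 ht]⟩
  have hfν : AEStronglyMeasurable f ν := hf.restrict.smul_measure _
  calc ‖⨍ y in s, f y ∂μ‖ₑ = ‖∫ y, f y ∂ν‖ₑ := by rw [setAverage_eq']
    _ ≤ ∫⁻ y, ‖f y‖ₑ ∂ν := enorm_integral_le_lintegral_enorm f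
    _ = eLpNorm f 1 ν := eLpNorm_one_eq_lintegral_enorm.symm
    _ ≤ eLpNorm f p ν := eLpNorm_le_eLpNorm_of_exponent_le hp hfν
    _ = (μ s)⁻¹ ^ (1 / p.toReal) * eLpNorm f p (μ.restrict s) := by
      rw [eLpNorm_smul_measure_of_ne_zero (ENNReal.inv_ne_zero.2 ht), smul_eq_mul,
        ENNReal.toReal_div, ENNReal.toReal_one]

section Averages

variable {X : Type*} [MetricSpace X] [MeasurableSpace X] {μ : Measure X} {f g : X → ℝ}

theorem avg_eq_setAverage (r : ℝ) (f : X → ℝ) (x : X) :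
    avg μ r f x = ⨍ y in closedBall x r, f y ∂μ :=
  (setAverage_eq μ f _).symm

theorem avg_congr_ae (h : f =ᵐ[μ] g) (r : ℝ) : avg μ r f = avg μ r g := by
  funext x
  rw [avg, avg, integral_congr_ae (ae_restrict_of_ae h)]

theorem avg_indicator_of_closedBall_subset {s : Set X} (hs : MeasurableSet s) {r : ℝ} {x : X}
    (h : closedBall x r ⊆ s) : avg μ r (s.indicator f) x = avg μ r f x := by
  rw [avg, avg, setIntegral_indicator hs, Set.inter_eq_left.2 h]

theorem avg_eq_zero_of_forall_mem {r : ℝ} {x : X} (h : ∀ y ∈ closedBall x r, f y = 0) :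
    avg μ r f x = 0 := by
  rw [avg, setIntegral_eq_zero_of_forall_eq_zero h, mul_zero]

section Measurability

variable [OpensMeasurableSpace X] [SecondCountableTopology X]

theorem measurableSet_dist_snd_fst_le (r : ℝ) : MeasurableSet {z : X × X | dist z.2 z.1 ≤ r} :=
  measurableSet_le (measurable_snd.dist measurable_fst) measurable_const

variable [SFinite μ]

theorem measurable_measure_closedBall (r : ℝ) : Measurable fun x => μ (closedBall x r) :=
  measurable_measure_prodMk_left (measurableSet_dist_snd_fst_le r)

theorem measurable_avg (hf : AEStronglyMeasurable f μ) (r : ℝ) : Measurable (avg μ r f) := by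
  rw [avg_congr_ae hf.ae_eq_mk]
  have hint : StronglyMeasurable fun x => ∫ y, (closedBall x r).indicator (hf.mk f) y ∂μ :=
    StronglyMeasurable.integral_prod_right <|
      (hf.stronglyMeasurable_mk.comp_measurable measurable_snd).indicator
        (measurableSet_dist_snd_fst_le r)
  simp only [integral_indicator measurableSet_closedBall] at hint
  exact (measurable_measure_closedBall r).ennreal_toReal.inv.mul hint.measurable

theorem lintegral_lintegral_closedBall_swap {w u : X → ℝ≥0∞} (hw : AEMeasurable w μ)
    (hu : AEMeasurable u μ) (r : ℝ) :
    ∫⁻ x, w x * ∫⁻ y in closedBall x r, u y ∂μ ∂μ =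
      ∫⁻ y, (∫⁻ x in closedBall y r, w x ∂μ) * u y ∂μ := by
  let k : X × X → ℝ≥0∞ := {z | dist z.2 z.1 ≤ r}.indicator fun z => w z.1 * u z.2
  have hk : AEMeasurable k (μ.prod μ) :=
    ((hw.comp_quasiMeasurePreserving Measure.quasiMeasurePreserving_fst).mul
      (hu.comp_quasiMeasurePreserving Measure.quasiMeasurePreserving_snd)).indicator
      (measurableSet_dist_snd_fst_le r)
  have hkx : ∀ x, ∫⁻ y, k (x, y) ∂μ = w x * ∫⁻ y in closedBall x r, u y ∂μ := fun x => by
    rw [← lintegral_const_mul'' _ hu.restrict, ← lintegral_indicator measurableSet_closedBall]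
    rfl
  have hky : ∀ y, ∫⁻ x, k (x, y) ∂μ = (∫⁻ x in closedBall y r, w x ∂μ) * u y := fun y => by
    rw [← lintegral_mul_const'' _ hw.restrict, ← lintegral_indicator measurableSet_closedBall]
    refine lintegral_congr fun x => ?_
    simp only [k, Set.indicator, mem_closedBall', Set.mem_ofPred_eq]
  simp only [← hkx, ← hky]
  exact lintegral_lintegral_swap hk

end Measurability

end Averages

namespace IsDoubling

variable {X : Type*} [MetricSpace X] [MeasurableSpace X] {μ : Measure X} {γ : ℝ≥0} {p : ℝ≥0∞}
  {f g : X → ℝ} {r : ℝ}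

theorem enorm_avg_le (hμ : IsDoubling μ γ) (hp : 1 ≤ p) (hf : AEStronglyMeasurable f μ) (x : X)
    (hr : 0 < r) : ‖avg μ r f x‖ₑ ≤
      (μ (closedBall x r))⁻¹ ^ (1 / p.toReal) * eLpNorm f p (μ.restrict (closedBall x r)) := by
  rw [avg_eq_setAverage]
  exact enorm_setAverage_le_mul_eLpNorm hp hf (hμ.measure_closedBall_ne_zero x hr)
    (hμ.measure_closedBall_ne_top x hr)

theorem integrableOn_closedBall (hμ : IsDoubling μ γ) (hp : 1 ≤ p) (hf : MemLp f p μ) (x : X)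
    (r : ℝ) : IntegrableOn f (closedBall x r) μ :=
  have : IsFiniteMeasure (μ.restrict (closedBall x r)) :=
    isFiniteMeasure_restrict.2 (hμ.measure_lt_top_of_isBounded isBounded_closedBall).ne
  (hf.restrict _).integrable hp

theorem avg_sub (hμ : IsDoubling μ γ) (hp : 1 ≤ p) (hf : MemLp f p μ) (hg : MemLp g p μ) (r : ℝ) :
    avg μ r (f - g) = avg μ r f - avg μ r g := by
  funext x
  simp only [avg, Pi.sub_apply, integral_sub (hμ.integrableOn_closedBall hp hf x r)
    (hμ.integrableOn_closedBall hp hg x r), mul_sub]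

theorem norm_avg_le_of_forall_norm_le (hμ : IsDoubling μ γ) (hp : 1 ≤ p) (hf : MemLp f p μ)
    {M : ℝ} (hM : ∀ y, ‖f y‖ ≤ M) (x : X) (hr : 0 < r) : ‖avg μ r f x‖ ≤ M := by
  rw [avg_eq_setAverage, ← mem_closedBall_zero_iff]
  exact (convex_closedBall 0 M).set_average_mem isClosed_closedBall
    (hμ.measure_closedBall_ne_zero x hr) (hμ.measure_closedBall_ne_top x hr)
    (Eventually.of_forall fun y => mem_closedBall_zero_iff.2 (hM y))
    (hμ.integrableOn_closedBall hp hf x r)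

theorem exists_norm_avg_le_mul_norm [Fact (1 ≤ p)] (hμ : IsDoubling μ γ) {E : Set X}
    (hE : Bornology.IsBounded E) (hr : 0 < r) :
    ∃ C : ℝ≥0, ∀ f : Lp ℝ p μ, ∀ x ∈ E, ‖avg μ r f x‖ ≤ C * ‖f‖ := by
  obtain ⟨c, hc⟩ := hμ.exists_inv_measure_closedBall_le hE hr
  refine ⟨c ^ (1 / p.toReal), fun f x hx => ?_⟩
  have hle : ‖avg μ r f x‖ₑ ≤ (c ^ (1 / p.toReal) : ℝ≥0) * ‖f‖ₑ :=
    calc ‖avg μ r f x‖ₑ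
        ≤ (μ (closedBall x r))⁻¹ ^ (1 / p.toReal) * eLpNorm f p (μ.restrict (closedBall x r)) :=
          hμ.enorm_avg_le Fact.out (Lp.aestronglyMeasurable f) x hr
      _ ≤ (c : ℝ≥0∞) ^ (1 / p.toReal) * eLpNorm f p μ := by
          gcongr
          · exact hc x hx
          · exact Measure.restrict_le_self
      _ = (c ^ (1 / p.toReal) : ℝ≥0) * ‖f‖ₑ := by
          rw [ENNReal.coe_rpow_of_nonneg _ (by positivity), Lp.enorm_def]
  simp only [enorm_eq_nnnorm, ← ENNReal.coe_mul, ENNReal.coe_le_coe] at hle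
  exact_mod_cast hle

section OpensMeasurableSpace

variable [OpensMeasurableSpace X]

theorem lintegral_inv_measure_closedBall_le (hμ : IsDoubling μ γ) (y : X) (hr : 0 < r) :
    ∫⁻ x in closedBall y r, (μ (closedBall x r))⁻¹ ∂μ ≤ γ := by
  have hle : ∀ x ∈ closedBall y r, (μ (closedBall x r))⁻¹ ≤ γ * (μ (closedBall y r))⁻¹ :=
    fun x hx => by
      have hsub : closedBall y r ⊆ closedBall x (2 ^ 1 * r) :=
        closedBall_subset_closedBall' (by linarith [mem_closedBall'.1 hx])
      simpa using hμ.inv_measure_closedBall_le hr hr hsub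
  calc ∫⁻ x in closedBall y r, (μ (closedBall x r))⁻¹ ∂μ
      ≤ ∫⁻ _ in closedBall y r, γ * (μ (closedBall y r))⁻¹ ∂μ :=
        setLIntegral_mono' measurableSet_closedBall hle
    _ = γ := by
        rw [setLIntegral_const, mul_assoc, ENNReal.inv_mul_cancel
          (hμ.measure_closedBall_ne_zero y hr) (hμ.measure_closedBall_ne_top y hr), mul_one]

theorem eLpNorm_avg_le (hμ : IsDoubling μ γ) (hp : 1 ≤ p) (hp' : p ≠ ⊤)
    (hf : AEStronglyMeasurable f μ) (hr : 0 < r) :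
    eLpNorm (avg μ r f) p μ ≤ γ ^ (1 / p.toReal) * eLpNorm f p μ := by
  have := hμ.sigmaFinite
  have := hμ.secondCountableTopology
  have hp0 : p ≠ 0 := (zero_lt_one.trans_le hp).ne'
  have hq : 0 < p.toReal := ENNReal.toReal_pos hp0 hp'
  have hjensen : ∀ x, ‖avg μ r f x‖ₑ ^ p.toReal ≤
      (μ (closedBall x r))⁻¹ * ∫⁻ y in closedBall x r, ‖f y‖ₑ ^ p.toReal ∂μ := fun x => by
    rw [← ENNReal.le_rpow_inv_iff hq, ← one_div p.toReal,
      ENNReal.mul_rpow_of_nonneg _ _ (by positivity),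
      ← eLpNorm_eq_lintegral_rpow_enorm_toReal hp0 hp']
    exact hμ.enorm_avg_le hp hf x hr
  have hlint : ∫⁻ x, ‖avg μ r f x‖ₑ ^ p.toReal ∂μ ≤ γ * ∫⁻ y, ‖f y‖ₑ ^ p.toReal ∂μ :=
    calc ∫⁻ x, ‖avg μ r f x‖ₑ ^ p.toReal ∂μ
        ≤ ∫⁻ x, (μ (closedBall x r))⁻¹ * ∫⁻ y in closedBall x r, ‖f y‖ₑ ^ p.toReal ∂μ ∂μ :=
          lintegral_mono hjensen
      _ = ∫⁻ y, (∫⁻ x in closedBall y r, (μ (closedBall x r))⁻¹ ∂μ) * ‖f y‖ₑ ^ p.toReal ∂μ :=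
          lintegral_lintegral_closedBall_swap (measurable_measure_closedBall r).inv.aemeasurable
            (hf.enorm.pow_const _) r
      _ ≤ ∫⁻ y, γ * ‖f y‖ₑ ^ p.toReal ∂μ := by
          gcongr with y
          exact hμ.lintegral_inv_measure_closedBall_le y hr
      _ = γ * ∫⁻ y, ‖f y‖ₑ ^ p.toReal ∂μ := lintegral_const_mul'' _ (hf.enorm.pow_const _)
  rw [eLpNorm_eq_lintegral_rpow_enorm_toReal hp0 hp',
    eLpNorm_eq_lintegral_rpow_enorm_toReal hp0 hp',
    ← ENNReal.mul_rpow_of_nonneg _ _ (by positivity)]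
  gcongr

theorem memLp_avg (hμ : IsDoubling μ γ) (hp : 1 ≤ p) (hp' : p ≠ ⊤) (hf : MemLp f p μ)
    (hr : 0 < r) : MemLp (avg μ r f) p μ := by
  have := hμ.sigmaFinite
  have := hμ.secondCountableTopology
  refine ⟨(measurable_avg hf.1 r).aestronglyMeasurable,
    (hμ.eLpNorm_avg_le hp hp' hf.1 hr).trans_lt (ENNReal.mul_lt_top ?_ hf.2)⟩
  finiteness

theorem eLpNorm_avg_sub_self_le_mul (hμ : IsDoubling μ γ) (hp : 1 ≤ p) (hp' : p ≠ ⊤)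
    (hf : MemLp f p μ) (hr : 0 < r) :
    eLpNorm (avg μ r f - f) p μ ≤ (γ ^ (1 / p.toReal) + 1) * eLpNorm f p μ :=
  calc eLpNorm (avg μ r f - f) p μ ≤ eLpNorm (avg μ r f) p μ + eLpNorm f p μ :=
        eLpNorm_sub_le (hμ.memLp_avg hp hp' hf hr).1 hf.1 hp
    _ ≤ γ ^ (1 / p.toReal) * eLpNorm f p μ + eLpNorm f p μ := by
        gcongr
        exact hμ.eLpNorm_avg_le hp hp' hf.1 hr
    _ = (γ ^ (1 / p.toReal) + 1) * eLpNorm f p μ := by ring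

theorem eLpNorm_avg_sub_self_le_add (hμ : IsDoubling μ γ) (hp : 1 ≤ p) (hp' : p ≠ ⊤)
    (hf : MemLp f p μ) (hg : MemLp g p μ) (hr : 0 < r) :
    eLpNorm (avg μ r f - f) p μ ≤
      eLpNorm (avg μ r g - g) p μ + (γ ^ (1 / p.toReal) + 1) * eLpNorm (f - g) p μ := by
  have hfg := hf.sub hg
  have hsplit : avg μ r f - f = (avg μ r g - g) + (avg μ r (f - g) - (f - g)) := by
    rw [hμ.avg_sub hp hf hg]
    abel
  rw [hsplit]
  refine (eLpNorm_add_le ((hμ.memLp_avg hp hp' hg hr).sub hg).1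
    ((hμ.memLp_avg hp hp' hfg hr).sub hfg).1 hp).trans ?_
  gcongr
  exact hμ.eLpNorm_avg_sub_self_le_mul hp hp' hfg hr

theorem eLpNorm_avg_avg_sub_self_le (hμ : IsDoubling μ γ) (hp : 1 ≤ p) (hp' : p ≠ ⊤)
    (hf : MemLp f p μ) (hr : 0 < r) :
    eLpNorm (avg μ r (avg μ r f) - f) p μ ≤
      (γ ^ (1 / p.toReal) + 1) * eLpNorm (avg μ r f - f) p μ := by
  have hA := hμ.memLp_avg hp hp' hf hr
  have hd := hA.sub hf
  have hsplit : avg μ r (avg μ r f) - f = avg μ r (avg μ r f - f) + (avg μ r f - f) := by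
    rw [hμ.avg_sub hp hA hf]
    abel
  calc eLpNorm (avg μ r (avg μ r f) - f) p μ
      ≤ eLpNorm (avg μ r (avg μ r f - f)) p μ + eLpNorm (avg μ r f - f) p μ := by
        rw [hsplit]
        exact eLpNorm_add_le (hμ.memLp_avg hp hp' hd hr).1 hd.1 hp
    _ ≤ γ ^ (1 / p.toReal) * eLpNorm (avg μ r f - f) p μ + eLpNorm (avg μ r f - f) p μ := by
        gcongr
        exact hμ.eLpNorm_avg_le hp hp' hd.1 hr
    _ = (γ ^ (1 / p.toReal) + 1) * eLpNorm (avg μ r f - f) p μ := by ring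

theorem eventually_forall_eLpNorm_avg_sub_self_le_add_edist [Fact (1 ≤ p)] (hμ : IsDoubling μ γ)
    (hp' : p ≠ ⊤) : ∀ᶠ r in 𝓝[>] (0 : ℝ), ∀ f g : Lp ℝ p μ, eLpNorm (avg μ r f - ⇑f) p μ ≤
      eLpNorm (avg μ r g - ⇑g) p μ + (γ ^ (1 / p.toReal) + 1) * edist f g := by
  filter_upwards [self_mem_nhdsWithin] with r hr f g
  rw [Lp.edist_def]
  exact hμ.eLpNorm_avg_sub_self_le_add Fact.out hp' (Lp.memLp f) (Lp.memLp g) hr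

theorem memLp_indicator_avg [Fact (1 ≤ p)] (hμ : IsDoubling μ γ) {E : Set X}
    (hE : Bornology.IsBounded E) (hEm : MeasurableSet E) (hr : 0 < r) (f : Lp ℝ p μ) (q : ℝ≥0∞) :
    MemLp (E.indicator (avg μ r f)) q μ := by
  have := hμ.sigmaFinite
  have := hμ.secondCountableTopology
  obtain ⟨C, hC⟩ := hμ.exists_norm_avg_le_mul_norm (p := p) hE hr
  have hEfin : μ E ≠ ⊤ := (hμ.measure_lt_top_of_isBounded hE).ne
  exact (memLp_indicator_const q hEm (C * ‖f‖) (Or.inr hEfin)).mono'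
    ((measurable_avg (Lp.aestronglyMeasurable f) r).indicator hEm).aestronglyMeasurable
    (Eventually.of_forall (norm_indicator_le_indicator_const (hC f)))

theorem tendsto_avg_of_tendsto_inner (hμ : IsDoubling μ γ) {h : ℕ → Lp ℝ 2 μ} {h₀ : Lp ℝ 2 μ}
    (hh : ∀ v, Tendsto (fun n => inner ℝ (h n) v) atTop (𝓝 (inner ℝ h₀ v))) (r : ℝ) (x : X) :
    Tendsto (fun n => avg μ r (h n) x) atTop (𝓝 (avg μ r h₀ x)) := by
  have hball : μ (closedBall x r) ≠ ⊤ := (hμ.measure_lt_top_of_isBounded isBounded_closedBall).ne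
  have hinner : ∀ v : Lp ℝ 2 μ, inner ℝ v (indicatorConstLp 2 measurableSet_closedBall hball 1) =
      ∫ y in closedBall x r, v y ∂μ := fun v => by
    rw [real_inner_comm, L2.inner_indicatorConstLp_one]
  simpa only [avg, hinner] using
    (hh (indicatorConstLp 2 measurableSet_closedBall hball 1)).const_mul
      (μ (closedBall x r)).toReal⁻¹

theorem tendsto_eLpNorm_indicator_avg_sub (hμ : IsDoubling μ γ) (hp' : p ≠ ⊤) {E : Set X}
    (hE : Bornology.IsBounded E) (hEm : MeasurableSet E) (hr : 0 < r) {h : ℕ → Lp ℝ 2 μ}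
    {h₀ : Lp ℝ 2 μ} {C : ℝ} (hC : ∀ n, ‖h n‖ ≤ C) (hC₀ : ‖h₀‖ ≤ C)
    (hh : ∀ v, Tendsto (fun n => inner ℝ (h n) v) atTop (𝓝 (inner ℝ h₀ v))) :
    Tendsto (fun n => eLpNorm (E.indicator (avg μ r (h n)) - E.indicator (avg μ r h₀)) p μ) atTop
      (𝓝 0) := by
  have := hμ.sigmaFinite
  have := hμ.secondCountableTopology
  obtain ⟨A, hA⟩ := hμ.exists_norm_avg_le_mul_norm (p := 2) hE hr
  have hbound : ∀ n, ∀ x ∈ E, ‖(avg μ r (h n) - avg μ r h₀) x‖ ≤ A * C + A * C := fun n x hx =>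
    calc ‖avg μ r (h n) x - avg μ r h₀ x‖ ≤ ‖avg μ r (h n) x‖ + ‖avg μ r h₀ x‖ := norm_sub_le _ _
      _ ≤ A * ‖h n‖ + A * ‖h₀‖ := add_le_add (hA _ x hx) (hA _ x hx)
      _ ≤ A * C + A * C := by gcongr; exact hC n
  simp only [← Set.indicator_sub']
  refine tendsto_eLpNorm_zero_of_dominated hp'
    (memLp_indicator_const p hEm (A * C + A * C) (Or.inr (hμ.measure_lt_top_of_isBounded hE).ne))
    (Eventually.of_forall fun n => ?_)
    (Eventually.of_forall fun n =>
      Eventually.of_forall (norm_indicator_le_indicator_const (hbound n)))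
    (Eventually.of_forall fun x => ?_)
  · exact (((measurable_avg (Lp.aestronglyMeasurable (h n)) r).sub
      (measurable_avg (Lp.aestronglyMeasurable h₀) r)).indicator hEm).aestronglyMeasurable
  · by_cases hx : x ∈ E
    · simpa [hx] using (hμ.tendsto_avg_of_tendsto_inner hh r x).sub_const (avg μ r h₀ x)
    · simp [hx]

end OpensMeasurableSpace

variable [BorelSpace X]

theorem tendsto_eLpNorm_avg_sub_self_of_bounded (hμ : IsDoubling μ γ) (hp : 1 ≤ p)
    (hp' : p ≠ ⊤) (hf : MemLp f p μ) {M : ℝ} (hM : ∀ x, ‖f x‖ ≤ M) {x₀ : X} {R : ℝ}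
    (hR : ∀ x ∉ closedBall x₀ R, f x = 0) :
    Tendsto (fun r => eLpNorm (avg μ r f - f) p μ) (𝓝[>] 0) (𝓝 0) := by
  have := hμ.sigmaFinite
  have := hμ.secondCountableTopology
  have := hμ.isLocallyFiniteMeasure
  have := hμ.isUnifLocDoublingMeasure
  refine tendsto_eLpNorm_zero_of_dominated hp'
    (memLp_indicator_const p (measurableSet_closedBall (x := x₀) (ε := R + 1)) (M + M)
      (Or.inr (hμ.measure_lt_top_of_isBounded isBounded_closedBall).ne)) ?_ ?_ ?_
  · exact Eventually.of_forall fun r => (measurable_avg hf.1 r).aestronglyMeasurable.sub hf.1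
  · filter_upwards [Ioo_mem_nhdsGT (one_pos : (0 : ℝ) < 1)] with r hr
    refine Eventually.of_forall fun x => ?_
    by_cases hx : x ∈ closedBall x₀ (R + 1)
    · rw [Set.indicator_of_mem hx]
      exact (norm_sub_le _ _).trans
        (add_le_add (hμ.norm_avg_le_of_forall_norm_le hp hf hM x hr.1) (hM x))
    · have hfx : ∀ y ∈ closedBall x r, f y = 0 := fun y hy => hR y fun hyR => hx <| by
        have := dist_triangle_left x x₀ y
        rw [mem_closedBall] at *
        linarith [hr.2]
      rw [Set.indicator_of_notMem hx, Pi.sub_apply, avg_eq_zero_of_forall_mem hfx,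
        hfx x (mem_closedBall_self hr.1.le), sub_zero, norm_zero]
  · filter_upwards [IsUnifLocDoublingMeasure.ae_tendsto_average μ (hf.locallyIntegrable hp) 1]
      with x hx
    have hlim : Tendsto (fun r => avg μ r f x) (𝓝[>] 0) (𝓝 (f x)) := by
      simp only [avg_eq_setAverage]
      refine hx (fun _ => x) id tendsto_id ?_
      filter_upwards [self_mem_nhdsWithin] with r hr
      exact mem_closedBall_self (by simpa using (Set.mem_Ioi.1 hr).le)
    simpa using hlim.sub_const (f x)

theorem tendsto_eLpNorm_avg_sub_self [Fact (1 ≤ p)] (hμ : IsDoubling μ γ)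
    (hp' : p ≠ ⊤) (f : Lp ℝ p μ) :
    Tendsto (fun r => eLpNorm (avg μ r f - ⇑f) p μ) (𝓝[>] 0) (𝓝 0) := by
  rcases isEmpty_or_nonempty X with hX | ⟨⟨x₀⟩⟩
  · simp [Measure.eq_zero_of_isEmpty μ]
  let S : ℕ → Set X := fun n => closedBall x₀ n ∩ {x | ‖f x‖ ≤ n}
  have hS : ∀ n, MeasurableSet (S n) := fun n => measurableSet_closedBall.inter
    (measurableSet_le (Lp.stronglyMeasurable f).norm.measurable measurable_const)
  have hmemS : ∀ x, ∀ᶠ n in atTop, x ∉ (S n)ᶜ := fun x => by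
    filter_upwards [tendsto_natCast_atTop_atTop.eventually_ge_atTop (dist x x₀),
      tendsto_natCast_atTop_atTop.eventually_ge_atTop ‖f x‖] with n hdist hnorm
    exact not_not.2 ⟨hdist, hnorm⟩
  have hfS : ∀ n, MemLp ((S n).indicator f) p μ := fun n => (Lp.memLp f).indicator (hS n)
  have hlim : Tendsto (fun n => (hfS n).toLp _) atTop (𝓝 f) := by
    conv in 𝓝 f => rw [← Lp.toLp_coeFn f (Lp.memLp f)]
    rw [Lp.tendsto_Lp_iff_tendsto_eLpNorm'']
    simpa only [eLpNorm_sub_comm _ f, ← Set.indicator_compl] using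
      tendsto_eLpNorm_indicator_zero hp' (Lp.memLp f) (fun n => (hS n).compl) hmemS
  refine tendsto_zero_of_mem_closure (C := γ ^ (1 / p.toReal) + 1) (by finiteness)
    (hμ.eventually_forall_eLpNorm_avg_sub_self_le_add_edist hp') ?_
    (mem_closure_of_tendsto hlim (Eventually.of_forall Set.mem_range_self))
  rintro _ ⟨n, rfl⟩
  have hbdd : ∀ x, ‖(S n).indicator f x‖ ≤ n := fun x =>
    (norm_indicator_le_indicator_const (fun y hy => hy.2) x).trans
      (Set.indicator_le_self' (fun _ _ => n.cast_nonneg) x)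
  refine (hμ.tendsto_eLpNorm_avg_sub_self_of_bounded Fact.out hp' (hfS n) hbdd
    fun x hx => Set.indicator_of_notMem (fun hxS => hx hxS.1) _).congr fun r => ?_
  rw [avg_congr_ae (hfS n).coeFn_toLp r]
  exact eLpNorm_congr_ae ((ae_eq_refl _).sub (hfS n).coeFn_toLp.symm)

theorem isCompact_setOf_ae_eq_indicator_avg [Fact (1 ≤ p)] (hμ : IsDoubling μ γ)
    (hp' : p ≠ ⊤) {E : Set X} (hE : Bornology.IsBounded E) (hEm : MeasurableSet E) (hr : 0 < r)
    (C : ℝ) :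
    IsCompact {k : Lp ℝ p μ | ∃ h : Lp ℝ 2 μ, ‖h‖ ≤ C ∧ k =ᵐ[μ] E.indicator (avg μ r h)} := by
  have := hμ.sigmaFinite
  have := hμ.secondCountableTopology
  have : Fact ((2 : ℝ≥0∞) ≠ ⊤) := ⟨ENNReal.ofNat_ne_top⟩
  refine IsSeqCompact.isCompact fun k hk => ?_
  choose h hhC hkh using hk
  obtain ⟨h₀, hh₀C, φ, hφ, hlim⟩ := exists_subseq_tendsto_inner hhC
  have hmem := hμ.memLp_indicator_avg hE hEm hr h₀ p
  refine ⟨hmem.toLp _, ⟨h₀, hh₀C, hmem.coeFn_toLp⟩, φ, hφ, ?_⟩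
  rw [Lp.tendsto_Lp_iff_tendsto_eLpNorm]
  exact (hμ.tendsto_eLpNorm_indicator_avg_sub hp' hE hEm hr (fun n => hhC (φ n)) hh₀C hlim).congr
    fun n => eLpNorm_congr_ae ((hkh (φ n)).symm.sub (ae_eq_refl _))

theorem exists_isCompact_forall_indicator_avg_avg_mem [Fact (1 ≤ p)]
    (hμ : IsDoubling μ γ) (hp' : p ≠ ⊤) {E : Set X} (hE : Bornology.IsBounded E)
    (hEm : MeasurableSet E) (hr : 0 < r) (N : ℝ) :
    ∃ K : Set (Lp ℝ p μ), IsCompact K ∧ ∀ f : Lp ℝ p μ, ‖f‖ ≤ N →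
      ∃ k ∈ K, k =ᵐ[μ] E.indicator (avg μ r (avg μ r f)) := by
  have hE' : Bornology.IsBounded (cthickening r E) := hE.cthickening
  have hE'm : MeasurableSet (cthickening r E) := isClosed_cthickening.measurableSet
  obtain ⟨A, hA⟩ := hμ.exists_norm_avg_le_mul_norm (p := p) hE' hr
  let b : Lp ℝ 2 μ :=
    indicatorConstLp 2 hE'm (hμ.measure_lt_top_of_isBounded hE').ne (A * N)
  have hb : b =ᵐ[μ] (cthickening r E).indicator fun _ => (A * N : ℝ) := indicatorConstLp_coeFn
  refine ⟨_, hμ.isCompact_setOf_ae_eq_indicator_avg hp' hE hEm hr ‖b‖, fun f hf => ?_⟩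
  have hmem := hμ.memLp_indicator_avg hE' hE'm hr f 2
  have hnorm : ‖hmem.toLp _‖ ≤ ‖b‖ := by
    refine Lp.norm_le_norm_of_ae_le ?_
    filter_upwards [hmem.coeFn_toLp, hb] with x hx hbx
    rw [hx, hbx]
    exact (norm_indicator_le_indicator_const
      (fun y hy => (hA f y hy).trans (by gcongr)) x).trans (le_abs_self _)
  have hk := hμ.memLp_indicator_avg hE hEm hr (hmem.toLp _) p
  refine ⟨hk.toLp _, ⟨hmem.toLp _, hnorm, hk.coeFn_toLp⟩, ?_⟩
  have heq : E.indicator (avg μ r (hmem.toLp _)) = E.indicator (avg μ r (avg μ r f)) := by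
    rw [avg_congr_ae hmem.coeFn_toLp]
    exact Set.indicator_congr fun x hx =>
      avg_indicator_of_closedBall_subset hE'm (closedBall_subset_cthickening hx r)
  exact heq ▸ hk.coeFn_toLp

theorem exists_forall_eLpNorm_avg_sub_self_lt [Fact (1 ≤ p)] (hμ : IsDoubling μ γ) (hp' : p ≠ ⊤)
    {F : Set (Lp ℝ p μ)} (hF : TotallyBounded F) {ε : ℝ≥0∞} (hε : 0 < ε) :
    ∃ δ : ℝ, 0 < δ ∧ ∀ f ∈ F, ∀ r, 0 < r → r < δ → eLpNorm (avg μ r f - ⇑f) p μ < ε := by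
  have hev := eventually_forall_mem_lt_of_totallyBounded (C := γ ^ (1 / p.toReal) + 1)
    (by finiteness) (hμ.eventually_forall_eLpNorm_avg_sub_self_le_add_edist hp') hF
    (hμ.tendsto_eLpNorm_avg_sub_self hp') hε
  obtain ⟨δ, hδ, hδε⟩ := mem_nhdsGT_iff_exists_Ioo_subset.1 hev
  exact ⟨δ, hδ, fun f hf r hr hrδ => hδε ⟨hr, hrδ⟩ f hf⟩

theorem totallyBounded_of_forall_exists_eLpNorm_le [Fact (1 ≤ p)] (hμ : IsDoubling μ γ)
    (hp' : p ≠ ⊤) {F : Set (Lp ℝ p μ)} (hF : Bornology.IsBounded F)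
    (havg : ∀ ε : ℝ≥0∞, 0 < ε →
      ∃ r : ℝ, 0 < r ∧ ∀ f ∈ F, eLpNorm (avg μ r f - ⇑f) p μ ≤ ε)
    (htail : ∀ ε : ℝ≥0∞, 0 < ε →
      ∃ E : Set X, Bornology.IsBounded E ∧ ∀ f ∈ F, eLpNorm (Eᶜ.indicator f) p μ ≤ ε) :
    TotallyBounded F := by
  have hp : 1 ≤ p := Fact.out
  obtain ⟨N, hN⟩ := hF.exists_norm_le
  refine totallyBounded_of_forall_exists_edist_le fun ε hε => ?_
  have hε2 : 0 < ε / 2 := ENNReal.half_pos hε.ne'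
  obtain ⟨η, hη, hηε⟩ := ENNReal.exists_nnreal_pos_mul_lt
    (show (γ : ℝ≥0∞) ^ (1 / p.toReal) + 1 ≠ ⊤ by finiteness) hε2.ne'
  obtain ⟨r, hr, hrη⟩ := havg η (by exact_mod_cast hη)
  obtain ⟨E, hE, hEε⟩ := htail (ε / 2) hε2
  have hEm : MeasurableSet (closure E) := isClosed_closure.measurableSet
  obtain ⟨K, hK, hFK⟩ :=
    hμ.exists_isCompact_forall_indicator_avg_avg_mem (p := p) hp' hE.closure hEm hr N
  refine ⟨K, hK.totallyBounded, fun f hf => ?_⟩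
  obtain ⟨k, hkK, hk⟩ := hFK f (hN f hf)
  have hf' := Lp.memLp f
  have hAA := hμ.memLp_avg hp hp' (hμ.memLp_avg hp hp' hf' hr) hr
  refine ⟨k, hkK, ?_⟩
  calc edist f k = eLpNorm (⇑f - (closure E).indicator (avg μ r (avg μ r f))) p μ := by
        rw [Lp.edist_def]
        exact eLpNorm_congr_ae ((ae_eq_refl _).sub hk)
    _ ≤ eLpNorm ((closure E)ᶜ.indicator f) p μ + eLpNorm (avg μ r (avg μ r f) - ⇑f) p μ :=
        eLpNorm_sub_indicator_le hp hf'.1 hAA.1 hEm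
    _ ≤ eLpNorm (Eᶜ.indicator f) p μ +
          (γ ^ (1 / p.toReal) + 1) * eLpNorm (avg μ r f - ⇑f) p μ := by
        refine add_le_add (eLpNorm_mono fun x => ?_)
          (hμ.eLpNorm_avg_avg_sub_self_le hp hp' hf' hr)
        exact norm_indicator_le_of_subset (Set.compl_subset_compl.2 subset_closure) f x
    _ ≤ ε / 2 + (γ ^ (1 / p.toReal) + 1) * η := by
        gcongr
        exacts [hEε f hf, hrη f hf]
    _ ≤ ε / 2 + ε / 2 := by
        rw [mul_comm _ (η : ℝ≥0∞)]
        gcongr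
    _ = ε := ENNReal.add_halves ε

end IsDoubling

theorem exists_isBounded_forall_eLpNorm_indicator_compl_lt {X E : Type*} [PseudoMetricSpace X]
    [MeasurableSpace X] [OpensMeasurableSpace X] {μ : Measure X} [NormedAddCommGroup E]
    {p : ℝ≥0∞} [Fact (1 ≤ p)] (hp' : p ≠ ⊤) {F : Set (Lp E p μ)} (hF : TotallyBounded F)
    {ε : ℝ≥0∞} (hε : 0 < ε) :
    ∃ s : Set X, Bornology.IsBounded s ∧ ∀ f ∈ F, eLpNorm (sᶜ.indicator f) p μ < ε := by
  rcases isEmpty_or_nonempty X with hX | ⟨⟨x₀⟩⟩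
  · exact ⟨∅, Bornology.isBounded_empty, fun f _ => by
      simpa [Measure.eq_zero_of_isEmpty μ] using hε⟩
  have hmeas : ∀ n : ℕ, MeasurableSet (closedBall x₀ n)ᶜ := fun n => measurableSet_closedBall.compl
  have hev : ∀ᶠ n : ℕ in atTop, ∀ f ∈ F, eLpNorm ((closedBall x₀ n)ᶜ.indicator f) p μ < ε := by
    refine eventually_forall_mem_lt_of_totallyBounded ENNReal.one_ne_top
      (Eventually.of_forall fun n f g => ?_) hF (fun g => ?_) hε
    · rw [one_mul, Lp.edist_def]
      exact eLpNorm_indicator_le_add Fact.out (Lp.aestronglyMeasurable f)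
        (Lp.aestronglyMeasurable g) (hmeas n)
    · refine tendsto_eLpNorm_indicator_zero hp' (Lp.memLp g) hmeas fun x => ?_
      filter_upwards [tendsto_natCast_atTop_atTop.eventually_ge_atTop (dist x x₀)] with n hn
      exact not_not.2 hn
  obtain ⟨n, hn⟩ := hev.exists
  exact ⟨closedBall x₀ n, isBounded_closedBall, hn⟩

theorem kolmogorov_riesz_general {X : Type*} [MetricSpace X] [MeasurableSpace X] [BorelSpace X]
    {μ : Measure X} {γ : ℝ≥0} (hμ : IsDoubling μ γ) {p : ℝ≥0∞} [Fact (1 ≤ p)] (hp' : p ≠ ⊤)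
    {F : Set (Lp ℝ p μ)} (hF : Bornology.IsBounded F) :
    IsCompact (closure F) ↔
      (∀ ε : ℝ, 0 < ε → ∃ δ : ℝ, 0 < δ ∧ ∀ f ∈ F, ∀ r : ℝ, 0 < r → r < δ →
          eLpNorm (fun x => avg μ r f x - f x) p μ < ENNReal.ofReal ε) ∧
        ∀ ε : ℝ, 0 < ε → ∃ E : Set X, Bornology.IsBounded E ∧ ∀ f ∈ F,
          eLpNorm (Eᶜ.indicator f) p μ < ENNReal.ofReal ε := by
  constructor
  · intro hcomp
    have hFtot : TotallyBounded F := hcomp.totallyBounded.subset subset_closure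
    exact ⟨fun ε hε =>
        hμ.exists_forall_eLpNorm_avg_sub_self_lt hp' hFtot (ENNReal.ofReal_pos.2 hε),
      fun ε hε => exists_isBounded_forall_eLpNorm_indicator_compl_lt hp' hFtot
        (ENNReal.ofReal_pos.2 hε)⟩
  · rintro ⟨havg, htail⟩
    have hreal : ∀ ε : ℝ≥0∞, 0 < ε → ∃ η : ℝ, 0 < η ∧ ENNReal.ofReal η ≤ ε := fun ε hε => by
      obtain ⟨η, hη, hηε⟩ := ENNReal.lt_iff_exists_nnreal_btwn.1 hε
      exact ⟨η, by exact_mod_cast hη, by simpa using hηε.le⟩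
    refine (hμ.totallyBounded_of_forall_exists_eLpNorm_le hp' hF (fun ε hε => ?_)
      fun ε hε => ?_).closure.isCompact_of_isClosed isClosed_closure
    · obtain ⟨η, hη, hηε⟩ := hreal ε hε
      obtain ⟨δ, hδ, hδη⟩ := havg η hη
      exact ⟨δ / 2, half_pos hδ, fun f hf =>
        (hδη f hf (δ / 2) (half_pos hδ) (half_lt_self hδ)).le.trans hηε⟩
    · obtain ⟨η, hη, hηε⟩ := hreal ε hε
      obtain ⟨E, hE, hEη⟩ := htail η hη
      exact ⟨E, hE, fun f hf => (hEη f hf).le.trans hηε⟩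

/-- Generalized Kolmogorov–Riesz compactness criterion in `L^p` of a doubling
metric measure space. -/
theorem kolmogorov_riesz {X : Type*} [MetricSpace X] [MeasurableSpace X] [BorelSpace X]
    (μ : Measure X)
    (hball : ∀ (x : X) (r : ℝ), 0 < r → μ (closedBall x r) ≠ 0 ∧ μ (closedBall x r) ≠ ⊤)
    (γ : ℝ) (hγ : 1 ≤ γ)
    (hdbl : ∀ (x : X) (r : ℝ), 0 < r →
      μ (closedBall x (2 * r)) ≤ ENNReal.ofReal γ * μ (closedBall x r))
    (hsymm : ∀ (x : X) (r : ℝ), 0 < r →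
      Tendsto (fun y => μ (symmDiff (closedBall x r) (closedBall y r))) (nhds x) (nhds 0))
    (p : ℝ≥0∞) [Fact (1 ≤ p)] (hp' : p ≠ ⊤)
    (F : Set (MeasureTheory.Lp ℝ p μ)) (hFbdd : Bornology.IsBounded F) :
    IsCompact (closure F) ↔
      ((∀ ε : ℝ, 0 < ε → ∃ δ : ℝ, 0 < δ ∧ ∀ f ∈ F, ∀ r : ℝ, 0 < r → r < δ →
          eLpNorm (fun x => avg μ r f x - f x) p μ < ENNReal.ofReal ε) ∧
        (∀ ε : ℝ, 0 < ε → ∃ E : Set X, Bornology.IsBounded E ∧ ∀ f ∈ F,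
          eLpNorm (Eᶜ.indicator f) p μ < ENNReal.ofReal ε)) :=
  kolmogorov_riesz_general (γ := γ.toNNReal) ⟨fun x _ hr => (hball x _ hr).1,
    fun x _ hr => (hball x _ hr).2, fun x _ hr => hdbl x _ hr⟩ hp' hFbdd
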